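/- Let k ≥ 3 and let G be a θ(1,p,q)-free graph with m edges and no isolated vertices, where p + q = 2k+1 and q ≥ p ≥ 3, and assume m ≥ (9/4)k⁶ + 6k⁵ + 46k⁴ + 56k³ + 196k². If ρ(G) = (k−1+√(4m−k²+1))/2, then G ≅ K_k ∨ (m/k − (k−1)/2)·K_1. -/

import Mathlib

open Matrix SimpleGraph

open Classical in
/-- The adjacency matrix of a simple graph over `ℝ`. -/
noncomputable def adjMat {V : Type} [Fintype V] (G : SimpleGraph V) : Matrix V V ℝ :=
  fun u v => if G.Adj u v then (1 : ℝ) else 0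

/-- `ρ` is the spectral radius (largest real eigenvalue) of the adjacency matrix of `G`. -/
def IsSpecRad {V : Type} [Fintype V] (G : SimpleGraph V) (ρ : ℝ) : Prop :=
  (∃ x : V → ℝ, x ≠ 0 ∧ adjMat G *ᵥ x = ρ • x) ∧
  ∀ μ : ℝ, (∃ x : V → ℝ, x ≠ 0 ∧ adjMat G *ᵥ x = μ • x) → μ ≤ ρ

/-- `G` contains a copy of `F` as a (not necessarily induced) subgraph. -/
def ContainsSub {α β : Type} (F : SimpleGraph α) (G : SimpleGraph β) : Prop :=
  ∃ f : F →g G, Function.Injective f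

/-- The theta graph `θ(1,p,q)` (for `p, q ≥ 2`): the hub vertices `a = Sum.inl ()` and
`b = Sum.inr (Sum.inl ())` are joined by an edge, by a path through the `p - 1` internal
vertices `Fin (p-1)`, and by a path through the `q - 1` internal vertices `Fin (q-1)`. -/
def thetaGraph (p q : ℕ) : SimpleGraph (Unit ⊕ Unit ⊕ Fin (p - 1) ⊕ Fin (q - 1)) :=
  SimpleGraph.fromRel (fun x y =>
    (x = Sum.inl () ∧ y = Sum.inr (Sum.inl ())) ∨
    (∃ i : Fin (p - 1), x = Sum.inl () ∧ y = Sum.inr (Sum.inr (Sum.inl i)) ∧ (i : ℕ) = 0) ∨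
    (∃ i j : Fin (p - 1), x = Sum.inr (Sum.inr (Sum.inl i)) ∧
      y = Sum.inr (Sum.inr (Sum.inl j)) ∧ (j : ℕ) = (i : ℕ) + 1) ∨
    (∃ i : Fin (p - 1), x = Sum.inr (Sum.inr (Sum.inl i)) ∧ y = Sum.inr (Sum.inl ()) ∧
      (i : ℕ) = p - 2) ∨
    (∃ i : Fin (q - 1), x = Sum.inl () ∧ y = Sum.inr (Sum.inr (Sum.inr i)) ∧ (i : ℕ) = 0) ∨
    (∃ i j : Fin (q - 1), x = Sum.inr (Sum.inr (Sum.inr i)) ∧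
      y = Sum.inr (Sum.inr (Sum.inr j)) ∧ (j : ℕ) = (i : ℕ) + 1) ∨
    (∃ i : Fin (q - 1), x = Sum.inr (Sum.inr (Sum.inr i)) ∧ y = Sum.inr (Sum.inl ()) ∧
      (i : ℕ) = q - 2))

/-- The join `K_k ∨ s·K₁`: every `inl` vertex is adjacent to everything else. -/
def joinStarG (k s : ℕ) : SimpleGraph (Fin k ⊕ Fin s) :=
  SimpleGraph.fromRel (fun x _ => x.isLeft = true)

open Classical in
/-- The adjacency indicator. -/
noncomputable def adj01 {V : Type} (G : SimpleGraph V) (u v : V) : ℝ :=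
  if G.Adj u v then (1 : ℝ) else 0

lemma adj01_symm {V : Type} (G : SimpleGraph V) (u v : V) :
    adj01 G u v = adj01 G v u := by
  unfold adj01
  by_cases h : G.Adj u v
  · simp [h, h.symm]
  · have h2 : ¬ G.Adj v u := fun h' => h h'.symm
    simp [h, h2]

lemma adj01_nonneg {V : Type} (G : SimpleGraph V) (u v : V) :
    0 ≤ adj01 G u v := by
  unfold adj01
  split_ifs <;> norm_num

lemma adj01_le_one {V : Type} (G : SimpleGraph V) (u v : V) :
    adj01 G u v ≤ 1 := by
  unfold adj01
  split_ifs <;> norm_num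

lemma adj01_self {V : Type} (G : SimpleGraph V) (u : V) :
    adj01 G u u = 0 := by
  unfold adj01
  simp

lemma adj01_of_adj {V : Type} {G : SimpleGraph V} {u v : V} (h : G.Adj u v) :
    adj01 G u v = 1 := by
  unfold adj01
  simp [h]

lemma adj01_of_not {V : Type} {G : SimpleGraph V} {u v : V} (h : ¬ G.Adj u v) :
    adj01 G u v = 0 := by
  unfold adj01
  simp [h]

/-- Theta embedding from a cyclic sequence. -/
lemma theta_of_seq {V : Type} (G : SimpleGraph V) (k p q : ℕ) (hp : 3 ≤ p) (hq : 3 ≤ q)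
    (hsum : p + q = 2 * k + 1) (c : ℕ → V)
    (hinj : ∀ i j, i ≤ 2 * k → j ≤ 2 * k → c i = c j → i = j)
    (hadj : ∀ i, i < 2 * k → G.Adj (c i) (c (i + 1)))
    (hclose : G.Adj (c 0) (c (2 * k)))
    (hchord : G.Adj (c 0) (c p)) :
    ∃ f : thetaGraph p q →g G, Function.Injective f := by
  let f : (Unit ⊕ Unit ⊕ Fin (p - 1) ⊕ Fin (q - 1)) → ℕ := fun x =>
    match x with
    | Sum.inl _ => 0
    | Sum.inr (Sum.inl _) => p
    | Sum.inr (Sum.inr (Sum.inl i)) => i + 1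
    | Sum.inr (Sum.inr (Sum.inr i)) => 2 * k - i
  have hfle : ∀ x, f x ≤ 2 * k := by
    rintro (_ | _ | i | i) <;> simp only [f] <;> omega
  have hfinj : ∀ x y, f x = f y → x = y := by
    rintro (x | x | x | x) (y | y | y | y) <;> simp only [f] <;> intro h <;>
      first
      | rfl
      | (exfalso; have := x.isLt; have := y.isLt; omega)
      | (exfalso; have := x.isLt; omega)
      | (exfalso; have := y.isLt; omega)
      | (exfalso; omega)
      | (congr 3; done)
      | (congr 3; omega)
  refine ⟨⟨fun x => c (f x), ?_⟩, ?_⟩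
  · have key : ∀ x y, ((x = Sum.inl () ∧ y = Sum.inr (Sum.inl ())) ∨
    (∃ i : Fin (p - 1), x = Sum.inl () ∧ y = Sum.inr (Sum.inr (Sum.inl i)) ∧ (i : ℕ) = 0) ∨
    (∃ i j : Fin (p - 1), x = Sum.inr (Sum.inr (Sum.inl i)) ∧
      y = Sum.inr (Sum.inr (Sum.inl j)) ∧ (j : ℕ) = (i : ℕ) + 1) ∨
    (∃ i : Fin (p - 1), x = Sum.inr (Sum.inr (Sum.inl i)) ∧ y = Sum.inr (Sum.inl ()) ∧
      (i : ℕ) = p - 2) ∨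
    (∃ i : Fin (q - 1), x = Sum.inl () ∧ y = Sum.inr (Sum.inr (Sum.inr i)) ∧ (i : ℕ) = 0) ∨
    (∃ i j : Fin (q - 1), x = Sum.inr (Sum.inr (Sum.inr i)) ∧
      y = Sum.inr (Sum.inr (Sum.inr j)) ∧ (j : ℕ) = (i : ℕ) + 1) ∨
    (∃ i : Fin (q - 1), x = Sum.inr (Sum.inr (Sum.inr i)) ∧ y = Sum.inr (Sum.inl ()) ∧
      (i : ℕ) = q - 2)) → G.Adj (c (f x)) (c (f y)) := by
      rintro x y (⟨rfl, rfl⟩ | ⟨i, rfl, rfl, hi⟩ | ⟨i, j, rfl, rfl, hi⟩ | ⟨i, rfl, rfl, hi⟩ |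
        ⟨i, rfl, rfl, hi⟩ | ⟨i, j, rfl, rfl, hi⟩ | ⟨i, rfl, rfl, hi⟩) <;> simp only [f]
      · exact hchord
      · rw [hi]; exact hadj 0 (by omega)
      · rw [hi]; exact hadj _ (by omega)
      · rw [hi, show p - 2 + 1 = p - 1 by omega]
        have := hadj (p - 1) (by omega)
        rwa [show p - 1 + 1 = p by omega] at this
      · rw [hi]; exact hclose
      · have := hadj (2 * k - j) (by omega)
        rw [show 2 * k - (j : ℕ) + 1 = 2 * k - i by omega] at this
        exact this.symm
      · have := hadj p (by omega)
        rw [show 2 * k - (i : ℕ) = p + 1 by omega]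
        exact this.symm
    intro x y hxy
    rw [thetaGraph, SimpleGraph.fromRel_adj] at hxy
    rcases hxy.2 with h | h
    · exact key x y h
    · exact (key y x h).symm
  · intro x y hxy
    exact hfinj x y (hinj _ _ (hfle x) (hfle y) hxy)

lemma theta_swap {V : Type} (G : SimpleGraph V) (p q : ℕ)
    (h : ContainsSub (thetaGraph q p) G) : ContainsSub (thetaGraph p q) G := by
  obtain ⟨f, hf⟩ := h
  let s : (Unit ⊕ Unit ⊕ Fin (p - 1) ⊕ Fin (q - 1)) → (Unit ⊕ Unit ⊕ Fin (q - 1) ⊕ Fin (p - 1)) :=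
    fun x => match x with
    | Sum.inl a => Sum.inl a
    | Sum.inr (Sum.inl a) => Sum.inr (Sum.inl a)
    | Sum.inr (Sum.inr (Sum.inl i)) => Sum.inr (Sum.inr (Sum.inr i))
    | Sum.inr (Sum.inr (Sum.inr i)) => Sum.inr (Sum.inr (Sum.inl i))
  have hs : Function.Injective s := by
    rintro (x | x | x | x) (y | y | y | y) <;> simp [s]
  refine ⟨⟨fun x => f (s x), ?_⟩, hf.comp hs⟩
  intro x y hxy
  apply f.map_adj
  rw [thetaGraph, SimpleGraph.fromRel_adj] at hxy ⊢
  refine ⟨fun h => hxy.1 (hs h), ?_⟩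
  rcases hxy.2 with (⟨rfl, rfl⟩ | ⟨i, rfl, rfl, hi⟩ | ⟨i, j, rfl, rfl, hi⟩ | ⟨i, rfl, rfl, hi⟩ |
        ⟨i, rfl, rfl, hi⟩ | ⟨i, j, rfl, rfl, hi⟩ | ⟨i, rfl, rfl, hi⟩) |
        (⟨rfl, rfl⟩ | ⟨i, rfl, rfl, hi⟩ | ⟨i, j, rfl, rfl, hi⟩ | ⟨i, rfl, rfl, hi⟩ |
        ⟨i, rfl, rfl, hi⟩ | ⟨i, j, rfl, rfl, hi⟩ | ⟨i, rfl, rfl, hi⟩) <;>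
    first
    | simp [s, hi]
    | simp [s]

/-- Theta from a path avoiding `z` whose first vertex and all even-position vertices
are neighbours of `z`. -/
lemma theta_of_list {V : Type} (G : SimpleGraph V) (k p q : ℕ) (hp : 3 ≤ p) (hq : 3 ≤ q)
    (hsum : p + q = 2 * k + 1) (z : V) (l : List V) (hlen : l.length = 2 * k)
    (hnd : l.Nodup) (hch : l.IsChain G.Adj) (hz : z ∉ l)
    (hfirst : ∀ h : 0 < l.length, G.Adj z l[0])
    (heven : ∀ i, ∀ h : i < l.length, i % 2 = 1 → G.Adj z l[i]) :
    ContainsSub (thetaGraph p q) G := by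
  let c : ℕ → V := fun i => (z :: l).getD i z
  have hc0 : c 0 = z := rfl
  have hcs : ∀ i (h : i < l.length), c (i + 1) = l[i] := by
    intro i h
    simp [c, h]
  have hinj : ∀ i j, i ≤ 2 * k → j ≤ 2 * k → c i = c j → i = j := by
    intro i j hi hj h
    rcases i with _ | i <;> rcases j with _ | j
    · rfl
    · rw [hc0, hcs j (by omega)] at h
      exact absurd (h ▸ List.getElem_mem _) hz
    · rw [hc0, hcs i (by omega)] at h
      exact absurd (h ▸ List.getElem_mem _) hz
    · rw [hcs i (by omega), hcs j (by omega)] at h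
      rw [hnd.getElem_inj_iff] at h
      rw [h]
  have hadj : ∀ i, i < 2 * k → G.Adj (c i) (c (i + 1)) := by
    intro i hi
    rcases i with _ | i
    · rw [hc0, hcs 0 (by omega)]
      exact hfirst (by omega)
    · rw [hcs i (by omega), hcs (i + 1) (by omega)]
      exact List.isChain_iff_getElem.1 hch i (by omega)
  have hev : ∀ i, 1 ≤ i → i ≤ k → G.Adj (c 0) (c (2 * i)) := by
    intro i h1 h2
    obtain ⟨j, rfl⟩ : ∃ j, i = j + 1 := ⟨i - 1, by omega⟩
    rw [hc0, show 2 * (j + 1) = (2 * j + 1) + 1 by ring, hcs (2 * j + 1) (by omega)]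
    exact heven _ _ (by omega)
  have hk1 : 1 ≤ k := by omega
  rcases Nat.even_or_odd' p with ⟨t, ht | ht⟩
  · exact theta_of_seq G k p q hp hq hsum c hinj hadj (hev k hk1 le_rfl)
      (ht ▸ hev t (by omega) (by omega))
  · apply theta_swap
    have : q = 2 * (k - t) := by omega
    exact theta_of_seq G k q p hq hp (by omega) c hinj hadj (hev k hk1 le_rfl)
      (this ▸ hev (k - t) (by omega) (by omega))

/-- A cyclic list can be opened at any vertex and extended. -/
lemma extend_cycle {V : Type} (G : SimpleGraph V) (c : List V) (hnd : c.Nodup)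
    (hch : c.IsChain G.Adj) (hcl : ∀ x ∈ c.getLast?, ∀ y ∈ c.head?, G.Adj x y)
    (v z : V) (hv : v ∈ c) (hz : z ∉ c) (hzv : G.Adj z v) :
    ∃ l : List V, l.Nodup ∧ l.IsChain G.Adj ∧ l.length = c.length + 1 ∧
      ∀ x ∈ l, x = z ∨ x ∈ c := by
  obtain ⟨s, t, rfl⟩ := List.append_of_mem hv
  refine ⟨z :: (v :: t ++ s), ?_, ?_, ?_, ?_⟩
  · rw [List.nodup_cons]
    have hp : (v :: t ++ s).Perm (s ++ v :: t) := List.perm_append_comm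
    exact ⟨fun h => hz (hp.mem_iff.1 h), hp.nodup_iff.2 hnd⟩
  · rw [List.isChain_append] at hch
    rw [List.isChain_cons]
    constructor
    · intro y hy
      simp at hy
      rw [← hy]; exact hzv
    · rw [List.isChain_append]
      refine ⟨hch.2.1, hch.1, ?_⟩
      intro x hx y hy
      apply hcl
      · simp only [List.getLast?_append]
        rw [Option.mem_def] at hx
        rw [hx]; simp
      · cases s with
        | nil => simp at hy
        | cons a s => simpa using hy
  · simp; omega
  · intro x hx
    simp at hx ⊢
    tauto

/-- Sum of ordered adjacencies. -/
noncomputable def eSum {V : Type} [Fintype V] (G : SimpleGraph V) (S T : Finset V) : ℝ :=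
  ∑ u ∈ S, ∑ v ∈ T, adj01 G u v

lemma eSum_comm {V : Type} [Fintype V] (G : SimpleGraph V) (S T : Finset V) :
    eSum G S T = eSum G T S := by
  unfold eSum
  rw [Finset.sum_comm]
  exact Finset.sum_congr rfl fun x _ => Finset.sum_congr rfl fun y _ => adj01_symm G _ _

lemma eSum_nonneg {V : Type} [Fintype V] (G : SimpleGraph V) (S T : Finset V) :
    0 ≤ eSum G S T :=
  Finset.sum_nonneg fun _ _ => Finset.sum_nonneg fun _ _ => adj01_nonneg G _ _

open Classical in
lemma eSum_split {V : Type} [Fintype V] (G : SimpleGraph V) (L T : Finset V) (h : L ⊆ T) :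
    eSum G T T = eSum G L L + 2 * eSum G L (T \ L) + eSum G (T \ L) (T \ L) := by
  have h1 : eSum G T T = eSum G L T + eSum G (T \ L) T := by
    unfold eSum
    rw [add_comm, Finset.sum_sdiff h]
  have h2 : ∀ S, eSum G S T = eSum G S L + eSum G S (T \ L) := by
    intro S
    unfold eSum
    rw [← Finset.sum_add_distrib]
    refine Finset.sum_congr rfl fun u _ => ?_
    rw [add_comm, Finset.sum_sdiff h]
  rw [h1, h2 L, h2 (T \ L), eSum_comm G (T \ L) L]
  ring

open Classical in
lemma eSum_self_le {V : Type} [Fintype V] (G : SimpleGraph V) (L : Finset V) :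
    eSum G L L ≤ (L.card : ℝ) * (L.card - 1) := by
  unfold eSum
  rw [← nsmul_eq_mul]
  apply Finset.sum_le_card_nsmul
  intro u hu
  rw [← Finset.add_sum_erase _ _ hu, adj01_self, zero_add]
  calc _ ≤ ∑ v ∈ L.erase u, (1 : ℝ) := Finset.sum_le_sum fun v _ => adj01_le_one G u v
    _ = _ := by
      rw [Finset.sum_const, Finset.card_erase_of_mem hu, nsmul_eq_mul, mul_one,
        Nat.cast_sub (Finset.card_pos.2 ⟨u, hu⟩)]
      simp

open Classical in
lemma sum_adj_eq_card {V : Type} [Fintype V] (G : SimpleGraph V) (u : V) (T : Finset V) :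
    ∑ v ∈ T, adj01 G u v = ((T.filter (fun v => G.Adj u v)).card : ℝ) := by
  unfold adj01
  rw [Finset.sum_boole]

open Classical in
/-- The set of vertices of a longest path is closed, when all degrees are at least `k`. -/
lemma longest_closed {V : Type} [Fintype V] (G : SimpleGraph V) (k : ℕ) (T : Finset V)
    (hdeg : ∀ v ∈ T, k ≤ (T.filter (fun w => G.Adj v w)).card)
    (l : List V) (hnd : l.Nodup) (hch : l.IsChain G.Adj) (hlT : ∀ v ∈ l, v ∈ T)
    (hpos : 0 < l.length) (hlen : l.length < 2 * k)
    (hmax : ∀ l' : List V, l'.Nodup → l'.IsChain G.Adj → (∀ v ∈ l', v ∈ T) →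
      l'.length ≤ l.length) :
    ∀ v ∈ l, ∀ z ∈ T, G.Adj v z → z ∈ l := by
  set n := l.length with hn
  have hlast : n - 1 < l.length := by omega
  have hext : ∀ z ∈ T, G.Adj l[0] z → z ∈ l := by
    intro z hz h
    by_contra hzl
    have := hmax (z :: l) (List.nodup_cons.2 ⟨hzl, hnd⟩) (List.isChain_cons.2 ⟨by
      intro y hy
      rw [List.head?_eq_getElem?, List.getElem?_eq_getElem hpos] at hy
      simp at hy
      rw [← hy]; exact h.symm, hch⟩) (by
        intro v hv
        rcases List.mem_cons.1 hv with rfl | hv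
        · exact hz
        · exact hlT v hv)
    simp at this
    omega
  have hext2 : ∀ z ∈ T, G.Adj l[n - 1] z → z ∈ l := by
    intro z hz h
    by_contra hzl
    have := hmax (l ++ [z]) (by
      rw [List.nodup_append]
      refine ⟨hnd, by simp, ?_⟩
      intro a ha b hb
      simp at hb
      rintro rfl
      exact hzl (hb ▸ ha)) (List.isChain_append.2 ⟨hch, by simp, by
      intro x hx y hy
      rw [List.getLast?_eq_getElem?, List.getElem?_eq_getElem hlast] at hx
      simp at hx hy
      rw [← hx, ← hy]; exact h⟩) (by
        intro v hv
        rcases List.mem_append.1 hv with hv | hv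
        · exact hlT v hv
        · simp at hv; rw [hv]; exact hz)
    simp at this
    omega
  let g : ℕ → V := fun i => l.getD i l[0]
  have hg : ∀ i (h : i < l.length), g i = l[i] := by
    intro i h; simp [g, h]
  let I0 := (Finset.range (n - 1)).filter (fun i => G.Adj l[0] (g (i + 1)))
  let I1 := (Finset.range (n - 1)).filter (fun i => G.Adj l[n - 1] (g i))
  have h0 : k ≤ I0.card := by
    refine (hdeg l[0] (hlT _ (List.getElem_mem _))).trans ?_
    refine (Finset.card_le_card (t := I0.image (fun i => g (i + 1))) ?_).trans
      Finset.card_image_le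
    intro z hz
    rw [Finset.mem_filter] at hz
    obtain ⟨i, hi, rfl⟩ := List.getElem_of_mem (hext z hz.1 hz.2)
    have hi0 : i ≠ 0 := by
      rintro rfl
      exact G.loopless.irrefl _ hz.2
    rw [Finset.mem_image]
    refine ⟨i - 1, ?_, ?_⟩
    · rw [Finset.mem_filter, Finset.mem_range]
      refine ⟨by omega, ?_⟩
      rw [show i - 1 + 1 = i by omega, hg i hi]
      exact hz.2
    · rw [show i - 1 + 1 = i by omega, hg i hi]
  have h1 : k ≤ I1.card := by
    refine (hdeg l[n - 1] (hlT _ (List.getElem_mem _))).trans ?_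
    refine (Finset.card_le_card (t := I1.image g) ?_).trans
      Finset.card_image_le
    intro z hz
    rw [Finset.mem_filter] at hz
    obtain ⟨i, hi, rfl⟩ := List.getElem_of_mem (hext2 z hz.1 hz.2)
    have hi0 : i ≠ n - 1 := by
      rintro rfl
      exact G.loopless.irrefl _ hz.2
    rw [Finset.mem_image]
    refine ⟨i, ?_, hg i hi⟩
    rw [Finset.mem_filter, Finset.mem_range]
    refine ⟨by omega, ?_⟩
    rw [hg i hi]
    exact hz.2
  have hInter : (I0 ∩ I1).Nonempty := by
    rw [← Finset.card_pos]
    have hun : (I0 ∪ I1).card ≤ n - 1 := by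
      have := Finset.card_le_card (Finset.union_subset (Finset.filter_subset _ _)
        (Finset.filter_subset _ _) : I0 ∪ I1 ⊆ Finset.range (n - 1))
      simpa using this
    have := Finset.card_union_add_card_inter I0 I1
    omega
  obtain ⟨i, hi⟩ := hInter
  simp only [I0, I1, Finset.mem_inter, Finset.mem_filter, Finset.mem_range] at hi
  obtain ⟨⟨hin, ha0⟩, -, ha1⟩ := hi
  rw [hg (i + 1) (by omega)] at ha0
  rw [hg i (by omega)] at ha1
  -- the cycle
  have hperm : (l.take (i + 1) ++ (l.drop (i + 1)).reverse).Perm l := by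
    have : (l.take (i + 1) ++ (l.drop (i + 1)).reverse).Perm (l.take (i + 1) ++ l.drop (i + 1)) :=
      (List.reverse_perm _).append_left _
    rwa [List.take_append_drop] at this
  have hcch : (l.take (i + 1) ++ (l.drop (i + 1)).reverse).IsChain G.Adj := by
    rw [List.isChain_append]
    refine ⟨hch.take _, ?_, ?_⟩
    · rw [List.isChain_reverse]
      have := hch.drop (i + 1)
      exact this.imp fun a b h => h.symm
    · intro x hx y hy
      rw [List.getLast?_eq_getElem?, List.getElem?_eq_getElem (by simp; omega)] at hx
      rw [List.head?_reverse, List.getLast?_eq_getElem?,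
        List.getElem?_eq_getElem (by simp; omega)] at hy
      simp only [Option.mem_def, Option.some.injEq, List.getElem_take, List.getElem_drop,
        List.length_take, List.length_drop] at hx hy
      have e1 : min (i + 1) l.length - 1 = i := by omega
      have e2 : i + 1 + (l.length - (i + 1) - 1) = n - 1 := by omega
      simp only [e1] at hx
      simp only [e2] at hy
      rw [← hx, ← hy]
      exact ha1.symm
  intro v hv z hz hvz
  by_contra hzl
  obtain ⟨l', h1, h2, h3, h4⟩ := extend_cycle G _ (hperm.nodup_iff.2 hnd) hcch (by
    intro x hx y hy
    rw [List.getLast?_append, List.getLast?_reverse, List.head?_eq_getElem?,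
      List.getElem?_eq_getElem (by simp; omega)] at hx
    rw [List.head?_append, List.head?_eq_getElem?,
      List.getElem?_eq_getElem (by simp; omega)] at hy
    simp only [Option.mem_def, Option.some_or, Option.some.injEq, List.getElem_take,
      List.getElem_drop] at hx hy
    rw [← hx, ← hy]
    exact ha0.symm) v z (hperm.mem_iff.2 hv) (fun h => hzl (hperm.mem_iff.1 h)) hvz.symm
  have := hmax l' h1 h2 (by
    intro x hx
    rcases h4 x hx with rfl | hx
    · exact hz
    · exact hlT x (hperm.mem_iff.1 hx))
  rw [h3, hperm.length_eq] at this
  omega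

open Classical in
/-- Erdős–Gallai for paths. -/
lemma erdos_gallai {V : Type} [Fintype V] (G : SimpleGraph V) (k : ℕ) (hk : 1 ≤ k) (U : Finset V)
    (hno : ∀ l : List V, l.Nodup → l.IsChain G.Adj → (∀ v ∈ l, v ∈ U) → l.length ≠ 2 * k) :
    ∀ n : ℕ, ∀ T : Finset V, T.card = n → T ⊆ U →
      eSum G T T ≤ 2 * ((k : ℝ) - 1) * T.card := by
  have hshort : ∀ l : List V, l.Nodup → l.IsChain G.Adj → (∀ v ∈ l, v ∈ U) →
      l.length < 2 * k := by
    intro l h1 h2 h3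
    by_contra h
    exact hno (l.take (2 * k)) (h1.sublist (List.take_sublist _ _)) (h2.take _)
      (fun v hv => h3 v (List.mem_of_mem_take hv)) (by simp; omega)
  intro n
  induction n using Nat.strong_induction_on with
  | _ n ih =>
  intro T hTn hTU
  rcases T.eq_empty_or_nonempty with rfl | hne
  · simp [eSum]
  by_cases hlow : ∃ v ∈ T, (T.filter (fun w => G.Adj v w)).card < k
  · obtain ⟨v, hv, hd⟩ := hlow
    have hs := eSum_split G {v} T (by simpa using hv)
    have hc : (T \ {v}).card = T.card - 1 := by
      rw [Finset.card_sdiff_of_subset (by simpa using hv)]; simp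
    have hcp : 0 < T.card := Finset.card_pos.2 ⟨v, hv⟩
    have hi := ih (T \ {v}).card (by omega) (T \ {v}) rfl (Finset.sdiff_subset.trans hTU)
    have e1 : eSum G {v} {v} = 0 := by simp [eSum, adj01_self]
    have e2 : eSum G {v} (T \ {v}) ≤ k - 1 := by
      unfold eSum
      rw [Finset.sum_singleton, sum_adj_eq_card]
      have : ((T \ {v}).filter (fun w => G.Adj v w)).card ≤ k - 1 := by
        have := Finset.card_le_card (Finset.filter_subset_filter (fun w => G.Adj v w)
          (Finset.sdiff_subset : T \ {v} ⊆ T))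
        omega
      calc _ ≤ ((k - 1 : ℕ) : ℝ) := by exact_mod_cast this
        _ = _ := by push_cast [Nat.cast_sub hk]; ring
    rw [hs, e1]
    rw [hc, Nat.cast_sub hcp] at hi
    push_cast at hi
    nlinarith
  · push Not at hlow
    let P : ℕ → Prop := fun n => ∃ l : List V, l.Nodup ∧ l.IsChain G.Adj ∧ (∀ v ∈ l, v ∈ T) ∧
      l.length = n
    have hP1 : P 1 := by
      obtain ⟨v, hv⟩ := hne
      exact ⟨[v], by simp, by simp, by simpa using hv, by simp⟩
    have hPb : ∀ n, P n → n ≤ 2 * k := by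
      rintro n ⟨l, h1, h2, h3, rfl⟩
      exact (hshort l h1 h2 (fun v hv => hTU (h3 v hv))).le
    have hsp : P (Nat.findGreatest P (2 * k)) := Nat.findGreatest_spec (by omega) hP1
    obtain ⟨l, h1, h2, h3, h4⟩ := hsp
    have hmax : ∀ l' : List V, l'.Nodup → l'.IsChain G.Adj → (∀ v ∈ l', v ∈ T) →
      l'.length ≤ l.length := by
      intro l' a b c
      rw [h4]
      exact Nat.le_findGreatest (hPb _ ⟨l', a, b, c, rfl⟩) ⟨l', a, b, c, rfl⟩
    have hpos : 0 < l.length := by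
      rw [h4]
      exact Nat.le_findGreatest (by omega) hP1
    have hl2k := hshort l h1 h2 (fun v hv => hTU (h3 v hv))
    have hcl := longest_closed G k T hlow l h1 h2 h3 hpos hl2k hmax
    have hLT : l.toFinset ⊆ T := fun v hv => h3 v (List.mem_toFinset.1 hv)
    have hs := eSum_split G l.toFinset T hLT
    have hLc : l.toFinset.card = l.length := List.toFinset_card_of_nodup h1
    have hc : (T \ l.toFinset).card = T.card - l.length := by
      rw [Finset.card_sdiff_of_subset hLT, hLc]
    have hle : l.length ≤ T.card := hLc ▸ Finset.card_le_card hLT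
    have hi := ih (T \ l.toFinset).card (by omega) (T \ l.toFinset) rfl
      (Finset.sdiff_subset.trans hTU)
    have e1 := eSum_self_le G l.toFinset
    have e2 : eSum G l.toFinset (T \ l.toFinset) = 0 := by
      unfold eSum
      refine Finset.sum_eq_zero fun u hu => Finset.sum_eq_zero fun v hv => ?_
      apply adj01_of_not
      intro hadj
      rw [Finset.mem_sdiff] at hv
      exact hv.2 (List.mem_toFinset.2 (hcl u (List.mem_toFinset.1 hu) v hv.1 hadj))
    rw [hLc] at e1
    rw [hc, Nat.cast_sub hle] at hi
    have hl' : (l.length : ℝ) ≤ 2 * k - 1 := by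
      have : l.length + 1 ≤ 2 * k := hl2k
      have : ((l.length + 1 : ℕ) : ℝ) ≤ ((2 * k : ℕ) : ℝ) := by exact_mod_cast this
      push_cast at this
      linarith
    have hl0 : (0 : ℝ) ≤ l.length := by positivity
    rw [hs, e2]
    nlinarith

open Classical in
/-- Weighted Erdős–Gallai. -/
lemma weighted_eg {V : Type} [Fintype V] (G : SimpleGraph V) (k : ℕ) (hk : 1 ≤ k) (U : Finset V)
    (hno : ∀ l : List V, l.Nodup → l.IsChain G.Adj → (∀ v ∈ l, v ∈ U) → l.length ≠ 2 * k) :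
    ∀ n : ℕ, ∀ T : Finset V, T.card = n → T ⊆ U → ∀ f : V → ℝ, (∀ v ∈ T, 0 ≤ f v) →
      ∑ u ∈ T, ∑ v ∈ T, adj01 G u v * min (f u) (f v) ≤ 2 * ((k : ℝ) - 1) * ∑ v ∈ T, f v := by
  intro n
  induction n with
  | zero =>
    intro T hT _ f _
    rw [Finset.card_eq_zero] at hT
    simp [hT]
  | succ n ih =>
    intro T hT hTU f hf
    have hne : T.Nonempty := Finset.card_pos.1 (by omega)
    obtain ⟨v0, hv0, hmin⟩ := Finset.exists_min_image T f hne
    have hi := ih (T.erase v0) (by rw [Finset.card_erase_of_mem hv0]; omega)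
      ((Finset.erase_subset _ _).trans hTU) (fun v => f v - f v0) (by
        intro v hv
        have := hmin v (Finset.mem_of_mem_erase hv)
        simpa using this)
    have heg := erdos_gallai G k hk U hno _ T rfl hTU
    have e1 : ∑ u ∈ T, ∑ v ∈ T, adj01 G u v * min (f u) (f v) = f v0 * eSum G T T +
        ∑ u ∈ T, ∑ v ∈ T, adj01 G u v * min (f u - f v0) (f v - f v0) := by
      unfold eSum
      rw [Finset.mul_sum, ← Finset.sum_add_distrib]
      refine Finset.sum_congr rfl fun u _ => ?_
      rw [Finset.mul_sum, ← Finset.sum_add_distrib]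
      refine Finset.sum_congr rfl fun v _ => ?_
      rw [min_sub_sub_right]
      ring
    have e2 : ∑ u ∈ T, ∑ v ∈ T, adj01 G u v * min (f u - f v0) (f v - f v0) =
        ∑ u ∈ T.erase v0, ∑ v ∈ T.erase v0, adj01 G u v * min (f u - f v0) (f v - f v0) := by
      rw [← Finset.add_sum_erase T _ hv0]
      rw [Finset.sum_eq_zero (s := T), zero_add]
      · refine Finset.sum_congr rfl fun u hu => ?_
        rw [← Finset.add_sum_erase T _ hv0]
        have := hmin u (Finset.mem_of_mem_erase hu)
        rw [sub_self, min_eq_right (by linarith)]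
        ring
      · intro v hv
        have := hmin v hv
        rw [sub_self, min_eq_left (by linarith)]
        ring
    have e3 : ∑ v ∈ T, f v = f v0 * T.card + ∑ v ∈ T.erase v0, (f v - f v0) := by
      rw [← Finset.add_sum_erase T f hv0, Finset.sum_sub_distrib, Finset.sum_const,
        Finset.card_erase_of_mem hv0, nsmul_eq_mul, Nat.cast_sub (by omega)]
      push_cast
      ring
    have h0 := hf v0 hv0
    have := mul_le_mul_of_nonneg_left heg h0
    rw [e1, e2, e3]
    linarith

open Classical in
/-- Alternating path through a list of hubs. -/
lemma hub_path {V : Type} (G : SimpleGraph V) (U : Finset V) (N : ℕ) :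
    ∀ hs : List V, hs.Nodup →
    (∀ h ∈ hs, ∀ h' ∈ hs, ∀ F : Finset V, F.card ≤ N →
      ∃ r ∈ U, r ∉ F ∧ G.Adj h r ∧ G.Adj r h') →
    ∀ F : Finset V, (∀ h ∈ hs, h ∉ F) → F.card + 2 * hs.length ≤ N →
    ∃ l : List V, l.length = 2 * hs.length ∧ l.Nodup ∧ l.IsChain G.Adj ∧ (∀ v ∈ l, v ∉ F) ∧
      l.head? = hs.head? ∧ (∀ i, ∀ h : i < l.length, i % 2 = 1 → l[i] ∈ U) ∧
      (∀ v ∈ l, v ∈ hs ∨ v ∈ U) := by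
  intro hs
  induction hs with
  | nil =>
    intro _ _ F _ _
    exact ⟨[], by simp⟩
  | cons h t ih =>
    intro hnd hub F hF hcard
    rw [List.nodup_cons] at hnd
    simp only [List.length_cons] at hcard
    have hmem : t.headD h ∈ h :: t := by
      cases t <;> simp
    obtain ⟨r, hrU, hrF, hr1, hr2⟩ := hub h (by simp) (t.headD h) hmem
      (F ∪ (h :: t).toFinset) (by
        have h1 := Finset.card_union_le F (h :: t).toFinset
        have h2 := List.toFinset_card_le (h :: t)
        simp only [List.length_cons] at h2
        omega)
    simp only [Finset.mem_union, List.mem_toFinset, List.mem_cons, not_or] at hrF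
    obtain ⟨hrF, hrh, hrt⟩ := hrF
    obtain ⟨l, h1, h2, h3, h4, h5, h6, h7⟩ := ih hnd.2
      (fun a ha b hb => hub a (by simp [ha]) b (by simp [hb])) (F ∪ {h, r}) (by
        intro a ha
        simp only [Finset.mem_union, Finset.mem_insert, Finset.mem_singleton, not_or]
        refine ⟨hF a (by simp [ha]), ?_, ?_⟩
        · rintro rfl; exact hnd.1 ha
        · rintro rfl; exact hrt ha) (by
        have h1 := Finset.card_union_le F {h, r}
        have h2 : ({h, r} : Finset V).card ≤ 2 := Finset.card_le_two
        omega)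
    simp only [Finset.mem_union, Finset.mem_insert, Finset.mem_singleton, not_or] at h4
    refine ⟨h :: r :: l, ?_, ?_, ?_, ?_, ?_, ?_, ?_⟩
    · simp [h1]; ring
    · rw [List.nodup_cons, List.nodup_cons]
      refine ⟨?_, fun hr => (h4 r hr).2.2 rfl, h2⟩
      rw [List.mem_cons, not_or]
      exact ⟨fun e => hrh e.symm, fun hh => (h4 h hh).2.1 rfl⟩
    · rw [List.isChain_cons, List.isChain_cons]
      refine ⟨by simpa using hr1, ?_, h3⟩
      intro x hx
      rw [h5] at hx
      cases t with
      | nil => simp at hx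
      | cons a t => simp at hx hr2; rw [← hx]; exact hr2
    · intro v hv
      rw [List.mem_cons, List.mem_cons] at hv
      rcases hv with rfl | rfl | hv
      · exact hF _ (by simp)
      · exact hrF
      · exact (h4 v hv).1
    · simp
    · intro i hi hodd
      match i with
      | 0 => simp at hodd
      | 1 => simpa using hrU
      | j + 2 =>
        simp only [List.getElem_cons_succ]
        exact h6 j _ (by omega)
    · intro v hv
      rw [List.mem_cons, List.mem_cons] at hv
      rcases hv with rfl | rfl | hv
      · left; simp
      · right; exact hrU
      · rcases h7 v hv with h | h
        · left; simp [h]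
        · right; exact h

/-- Nonnegative normalised eigenvector. -/
lemma perron {V : Type} [Fintype V] (G : SimpleGraph V) (ρ : ℝ) (h : IsSpecRad G ρ) :
    ∃ (y : V → ℝ) (z : V), (∀ v, 0 ≤ y v) ∧ (∀ v, y v ≤ 1) ∧ y z = 1 ∧
      ∀ u, ∑ v, adj01 G u v * y v = ρ * y u := by
  classical
  obtain ⟨⟨x, hx0, hx⟩, hmax⟩ := h
  have hentry : ∀ u v, adjMat G u v = adj01 G u v := fun u v => by
    unfold adjMat adj01; rfl
  have hA : (adjMat G).IsHermitian := by
    ext u v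
    simp only [Matrix.conjTranspose_apply, hentry, star_trivial]
    exact adj01_symm G v u
  have hH : ((ρ • (1 : Matrix V V ℝ)) - adjMat G).IsHermitian := by
    refine Matrix.IsHermitian.sub ?_ hA
    unfold Matrix.IsHermitian
    simp
  have hP : ((ρ • (1 : Matrix V V ℝ)) - adjMat G).PosSemidef := by
    rw [hH.posSemidef_iff_eigenvalues_nonneg]
    intro i
    have h1 := hH.mulVec_eigenvectorBasis i
    have h2 : (hH.eigenvectorBasis i).ofLp ≠ 0 := by
      intro h0
      have := (hH.eigenvectorBasis.orthonormal).ne_zero i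
      apply this
      ext j
      exact congrFun h0 j
    have := hmax (ρ - hH.eigenvalues i) ⟨_, h2, by
      rw [Matrix.sub_mulVec, Matrix.smul_mulVec, Matrix.one_mulVec] at h1
      rw [sub_smul, ← h1]
      abel⟩
    simpa using this
  have hxe : ∀ u, ∑ v, adj01 G u v * x v = ρ * x u := by
    intro u
    have := congrFun hx u
    simpa [Matrix.mulVec, dotProduct, hentry] using this
  let y : V → ℝ := fun v => |x v|
  have hyle : ∀ u, ρ * y u ≤ ∑ v, adj01 G u v * y v := by
    intro u
    by_cases hρ : 0 ≤ ρ
    · have : ρ * y u = |∑ v, adj01 G u v * x v| := by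
        rw [hxe, abs_mul, abs_of_nonneg hρ]
      rw [this]
      refine (Finset.abs_sum_le_sum_abs _ _).trans (le_of_eq ?_)
      refine Finset.sum_congr rfl fun v _ => ?_
      rw [abs_mul, abs_of_nonneg (adj01_nonneg G u v)]
    · have h1 : ρ * y u ≤ 0 := mul_nonpos_of_nonpos_of_nonneg (by linarith) (abs_nonneg _)
      refine h1.trans (Finset.sum_nonneg fun v _ => mul_nonneg (adj01_nonneg G u v) (abs_nonneg _))
  have hmv : ∀ u, (((ρ • (1 : Matrix V V ℝ)) - adjMat G) *ᵥ y) u =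
      ρ * y u - ∑ v, adj01 G u v * y v := by
    intro u
    rw [Matrix.sub_mulVec, Matrix.smul_mulVec, Matrix.one_mulVec]
    simp [Matrix.mulVec, dotProduct, hentry]
  have hz : star y ⬝ᵥ (((ρ • (1 : Matrix V V ℝ)) - adjMat G) *ᵥ y) = 0 := by
    apply le_antisymm
    · simp only [dotProduct, hmv]
      refine Finset.sum_nonpos fun u _ => ?_
      have h1 : 0 ≤ y u := abs_nonneg _
      have h2 := hyle u
      simp only [Pi.star_apply, star_trivial]
      exact mul_nonpos_of_nonneg_of_nonpos h1 (by linarith)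
    · have := hP.re_dotProduct_nonneg y
      simpa using this
  rw [hP.dotProduct_mulVec_zero_iff] at hz
  have hye : ∀ u, ∑ v, adj01 G u v * y v = ρ * y u := by
    intro u
    have := congrFun hz u
    rw [hmv] at this
    simp at this
    linarith
  obtain ⟨v0, hv0⟩ := Function.ne_iff.1 hx0
  obtain ⟨z, -, hzmax⟩ := Finset.exists_max_image Finset.univ y ⟨v0, Finset.mem_univ _⟩
  have hyz : 0 < y z := lt_of_lt_of_le (abs_pos.2 hv0) (hzmax v0 (Finset.mem_univ _))
  refine ⟨fun v => y v / y z, z, fun v => div_nonneg (abs_nonneg _) hyz.le,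
    fun v => (div_le_one hyz).2 (hzmax v (Finset.mem_univ _)), div_self hyz.ne', ?_⟩
  intro u
  simp only [mul_div_assoc']
  rw [← Finset.sum_div, hye]

open Classical in
lemma eSum_univ {V : Type} [Fintype V] (G : SimpleGraph V) :
    eSum G Finset.univ Finset.univ = 2 * (G.edgeSet.ncard : ℝ) := by
  unfold eSum
  simp only [sum_adj_eq_card]
  have h1 := G.sum_degrees_eq_twice_card_edges
  have h2 : G.edgeSet.ncard = G.edgeFinset.card := by
    rw [← SimpleGraph.coe_edgeFinset, Set.ncard_coe_finset]
  rw [h2]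
  have h3 : ∀ v, G.degree v = (Finset.univ.filter (fun w => G.Adj v w)).card := by
    intro v
    rw [← SimpleGraph.card_neighborFinset_eq_degree, SimpleGraph.neighborFinset_eq_filter]
  simp only [h3] at h1
  exact_mod_cast h1

/-- The local situation around a vertex `z` of maximal eigenvector entry. -/
structure Setup {V : Type} [Fintype V] (G : SimpleGraph V) (k p q m : ℕ) (ρ : ℝ) (y : V → ℝ)
    (z : V) (U W : Finset V) : Prop where
  hk : 3 ≤ k
  hp : 3 ≤ p
  hq : 3 ≤ q
  hsum : p + q = 2 * k + 1
  free : ¬ ContainsSub (thetaGraph p q) G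
  y0 : ∀ v, 0 ≤ y v
  y1 : ∀ v, y v ≤ 1
  yz : y z = 1
  eig : ∀ u, ∑ v, adj01 G u v * y v = ρ * y u
  hU : ∀ v, v ∈ U ↔ G.Adj z v
  hW : ∀ v, v ∈ W ↔ v ≠ z ∧ ¬ G.Adj z v
  hρ : (3 / 2 : ℝ) * k ^ 3 + 2 * k ^ 2 + 14 * k ≤ ρ
  hiso : ∀ v, ∃ w, G.Adj v w
  hm : eSum G Finset.univ Finset.univ = 2 * (m : ℝ)
  hquad : ρ ^ 2 - (k - 1) * ρ = m - k * (k - 1) / 2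

namespace Setup

variable {V : Type} [Fintype V] {G : SimpleGraph V} {k p q m : ℕ} {ρ : ℝ} {y : V → ℝ}
    {z : V} {U W : Finset V}

lemma zU (S : Setup G k p q m ρ y z U W) : z ∉ U := by
  rw [S.hU]; exact G.loopless.irrefl z

lemma zW (S : Setup G k p q m ρ y z U W) : z ∉ W := by
  rw [S.hW]; simp

lemma UW (S : Setup G k p q m ρ y z U W) : Disjoint U W := by
  rw [Finset.disjoint_left]
  intro v h1 h2
  rw [S.hU] at h1
  rw [S.hW] at h2
  exact h2.2 h1

open Classical in
lemma sum_all (S : Setup G k p q m ρ y z U W) (f : V → ℝ) :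
    ∑ v, f v = f z + ∑ v ∈ U, f v + ∑ v ∈ W, f v := by
  have : (Finset.univ : Finset V) = insert z (U ∪ W) := by
    ext v
    simp only [Finset.mem_univ, Finset.mem_insert, Finset.mem_union, S.hU, S.hW, true_iff]
    tauto
  rw [this, Finset.sum_insert, Finset.sum_union S.UW]
  · ring
  · rw [Finset.mem_union, not_or]
    exact ⟨S.zU, S.zW⟩

lemma azU (S : Setup G k p q m ρ y z U W) {u : V} (hu : u ∈ U) : adj01 G z u = 1 :=
  adj01_of_adj ((S.hU u).1 hu)

lemma azW (S : Setup G k p q m ρ y z U W) {u : V} (hu : u ∈ W) : adj01 G z u = 0 :=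
  adj01_of_not ((S.hW u).1 hu).2

lemma sumU (S : Setup G k p q m ρ y z U W) : ∑ u ∈ U, y u = ρ := by
  have h := S.eig z
  rw [S.sum_all, S.yz, adj01_self] at h
  rw [Finset.sum_congr rfl (fun u hu => by rw [S.azU hu, one_mul] : ∀ u ∈ U, _ = y u),
    Finset.sum_eq_zero (s := W) (fun u hu => by rw [S.azW hu, zero_mul])] at h
  linarith

lemma eigU (S : Setup G k p q m ρ y z U W) {u : V} (hu : u ∈ U) :
    ρ * y u = 1 + ∑ v ∈ U, adj01 G u v * y v + ∑ v ∈ W, adj01 G u v * y v := by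
  rw [← S.eig u, S.sum_all, S.yz, adj01_symm, S.azU hu, one_mul]

lemma eigW (S : Setup G k p q m ρ y z U W) {w : V} (hw : w ∈ W) :
    ρ * y w = ∑ v ∈ U, adj01 G w v * y v + ∑ v ∈ W, adj01 G w v * y v := by
  rw [← S.eig w, S.sum_all, S.yz, adj01_symm, S.azW hw, zero_mul, zero_add]

lemma edges (S : Setup G k p q m ρ y z U W) :
    2 * (m : ℝ) = 2 * U.card + eSum G U U + 2 * eSum G U W + eSum G W W := by
  rw [← S.hm]
  have h1 : ∀ u, ∑ v, adj01 G u v = adj01 G u z + ∑ v ∈ U, adj01 G u v + ∑ v ∈ W, adj01 G u v :=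
    fun u => S.sum_all _
  have e1 : ∑ u ∈ U, adj01 G u z = U.card := by
    rw [Finset.sum_congr rfl (fun u hu => by rw [adj01_symm, S.azU hu] : ∀ u ∈ U, _ = (1 : ℝ))]
    simp
  have e2 : ∑ u ∈ W, adj01 G u z = 0 :=
    Finset.sum_eq_zero (fun u hu => by rw [adj01_symm, S.azW hu])
  have e3 : ∑ u ∈ U, adj01 G z u = U.card := by
    rw [← e1]; exact Finset.sum_congr rfl fun u _ => adj01_symm _ _ _
  have e4 : ∑ u ∈ W, adj01 G z u = 0 := by
    rw [← e2]; exact Finset.sum_congr rfl fun u _ => adj01_symm _ _ _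
  have e5 := eSum_comm G W U
  unfold eSum at e5 ⊢
  rw [S.sum_all]
  simp only [h1, Finset.sum_add_distrib]
  rw [e1, e2, e3, e4, adj01_self, e5]
  ring

/-- The main identity. -/
lemma main (S : Setup G k p q m ρ y z U W) :
    eSum G W W / 2 + ∑ w ∈ W, (∑ u ∈ U, adj01 G w u) * (1 - y w) =
      k * (k - 1) / 2 + ∑ u ∈ U, ((∑ v ∈ U, adj01 G u v) - (k - 1)) * y u - eSum G U U / 2 := by
  have h1 : ρ ^ 2 = U.card + ∑ u ∈ U, (∑ v ∈ U, adj01 G u v) * y u +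
      ∑ w ∈ W, (∑ u ∈ U, adj01 G w u) * y w := by
    calc ρ ^ 2 = ∑ u ∈ U, ρ * y u := by rw [← Finset.mul_sum, S.sumU]; ring
      _ = ∑ u ∈ U, (1 + ∑ v ∈ U, adj01 G u v * y v + ∑ v ∈ W, adj01 G u v * y v) :=
        Finset.sum_congr rfl fun u hu => S.eigU hu
      _ = _ := by
        rw [Finset.sum_add_distrib, Finset.sum_add_distrib, Finset.sum_comm (s := U) (t := U),
          Finset.sum_comm (s := U) (t := W)]
        simp only [Finset.sum_mul]
        congr 1
        · congr 1
          · simp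
          · exact Finset.sum_congr rfl fun u _ => Finset.sum_congr rfl fun v _ => by
              rw [adj01_symm]
        · exact Finset.sum_congr rfl fun u _ => Finset.sum_congr rfl fun v _ => by
              rw [adj01_symm]
  have h2 := S.edges
  have h3 := S.hquad
  have h4 : ∑ w ∈ W, (∑ u ∈ U, adj01 G w u) * (1 - y w) = eSum G U W -
      ∑ w ∈ W, (∑ u ∈ U, adj01 G w u) * y w := by
    rw [eSum_comm]
    unfold eSum
    rw [← Finset.sum_sub_distrib]
    exact Finset.sum_congr rfl fun w _ => by ring
  have h5 : ∑ u ∈ U, ((∑ v ∈ U, adj01 G u v) - (k - 1)) * y u =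
      ∑ u ∈ U, (∑ v ∈ U, adj01 G u v) * y u - (k - 1) * ρ := by
    rw [← S.sumU, Finset.mul_sum, ← Finset.sum_sub_distrib]
    exact Finset.sum_congr rfl fun w _ => by ring
  rw [h4, h5]
  linarith

lemma noPath (S : Setup G k p q m ρ y z U W) :
    ∀ l : List V, l.Nodup → l.IsChain G.Adj → (∀ v ∈ l, v ∈ U) → l.length ≠ 2 * k := by
  intro l h1 h2 h3 h4
  apply S.free
  exact theta_of_list G k p q S.hp S.hq S.hsum z l h4 h1 h2 (fun h => S.zU (h3 z h))
    (fun h => (S.hU _).1 (h3 _ (List.getElem_mem _)))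
    (fun i h _ => (S.hU _).1 (h3 _ (List.getElem_mem _)))

lemma weg (S : Setup G k p q m ρ y z U W) (T : Finset V) (hT : T ⊆ U) :
    ∑ u ∈ T, ∑ v ∈ T, adj01 G u v * min (y u) (y v) ≤ 2 * ((k : ℝ) - 1) * ∑ v ∈ T, y v :=
  weighted_eg G k (by have := S.hk; omega) U S.noPath _ T rfl hT y (fun v _ => S.y0 v)

lemma total (S : Setup G k p q m ρ y z U W) :
    eSum G W W / 2 + ∑ w ∈ W, (∑ u ∈ U, adj01 G w u) * (1 - y w) +
      (∑ u ∈ U, ∑ v ∈ U, adj01 G u v * (1 - max (y u) (y v))) / 2 +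
      ((k - 1) * ρ - (∑ u ∈ U, ∑ v ∈ U, adj01 G u v * min (y u) (y v)) / 2) =
      k * (k - 1) / 2 := by
  have h := S.main
  have h5 : ∑ u ∈ U, ((∑ v ∈ U, adj01 G u v) - (k - 1)) * y u =
      ∑ u ∈ U, (∑ v ∈ U, adj01 G u v) * y u - (k - 1) * ρ := by
    rw [← S.sumU, Finset.mul_sum, ← Finset.sum_sub_distrib]
    exact Finset.sum_congr rfl fun w _ => by ring
  have h6 : ∑ u ∈ U, (∑ v ∈ U, adj01 G u v) * y u = ∑ u ∈ U, ∑ v ∈ U, adj01 G u v * y u := by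
    simp only [Finset.sum_mul]
  have h7 : ∑ u ∈ U, ∑ v ∈ U, adj01 G u v * y u = ∑ u ∈ U, ∑ v ∈ U, adj01 G u v * y v := by
    rw [Finset.sum_comm]
    exact Finset.sum_congr rfl fun u _ => Finset.sum_congr rfl fun v _ => by
              rw [adj01_symm]
  have h8 : ∑ u ∈ U, ∑ v ∈ U, adj01 G u v * (1 - max (y u) (y v)) = eSum G U U -
      ∑ u ∈ U, ∑ v ∈ U, adj01 G u v * y u - ∑ u ∈ U, ∑ v ∈ U, adj01 G u v * y v +
      ∑ u ∈ U, ∑ v ∈ U, adj01 G u v * min (y u) (y v) := by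
    unfold eSum
    simp only [← Finset.sum_sub_distrib, ← Finset.sum_add_distrib]
    refine Finset.sum_congr rfl fun u _ => Finset.sum_congr rfl fun v _ => ?_
    have := min_add_max (y u) (y v)
    linear_combination -(adj01 G u v) * this
  rw [h5, h6] at h
  rw [h8]
  linarith

lemma n1 : 0 ≤ eSum G W W := eSum_nonneg _ _ _

lemma dnn (u : V) (T : Finset V) : 0 ≤ ∑ v ∈ T, adj01 G u v :=
  Finset.sum_nonneg fun _ _ => adj01_nonneg _ _ _

lemma n2 (S : Setup G k p q m ρ y z U W) :
    0 ≤ ∑ w ∈ W, (∑ u ∈ U, adj01 G w u) * (1 - y w) :=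
  Finset.sum_nonneg fun w _ => mul_nonneg (dnn _ _) (by linarith [S.y1 w])

lemma n3 (S : Setup G k p q m ρ y z U W) :
    0 ≤ ∑ u ∈ U, ∑ v ∈ U, adj01 G u v * (1 - max (y u) (y v)) :=
  Finset.sum_nonneg fun u _ => Finset.sum_nonneg fun v _ =>
    mul_nonneg (adj01_nonneg _ _ _) (by linarith [max_le (S.y1 u) (S.y1 v)])

lemma n4 (S : Setup G k p q m ρ y z U W) :
    0 ≤ (k - 1) * ρ - (∑ u ∈ U, ∑ v ∈ U, adj01 G u v * min (y u) (y v)) / 2 := by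
  have := S.weg U subset_rfl
  rw [S.sumU] at this
  linarith

lemma c1 (S : Setup G k p q m ρ y z U W) : eSum G W W ≤ k * (k - 1) := by
  have := S.total; have := S.n2; have := S.n3; have := S.n4
  linarith

lemma c2 (S : Setup G k p q m ρ y z U W) :
    ∑ w ∈ W, (∑ u ∈ U, adj01 G w u) * (1 - y w) ≤ k * (k - 1) / 2 := by
  have := S.total; have := n1 (G := G) (W := W); have := S.n3; have := S.n4
  linarith

lemma c3 (S : Setup G k p q m ρ y z U W) :
    ∑ u ∈ U, ∑ v ∈ U, adj01 G u v * (1 - max (y u) (y v)) ≤ k * (k - 1) := by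
  have := S.total; have := n1 (G := G) (W := W); have := S.n2; have := S.n4
  linarith

lemma c4 (S : Setup G k p q m ρ y z U W) :
    (k - 1) * ρ - (∑ u ∈ U, ∑ v ∈ U, adj01 G u v * min (y u) (y v)) / 2 ≤ k * (k - 1) / 2 := by
  have := S.total; have := n1 (G := G) (W := W); have := S.n2; have := S.n3
  linarith

lemma k3 (S : Setup G k p q m ρ y z U W) : (3 : ℝ) ≤ k := by exact_mod_cast S.hk

lemma rho_big (S : Setup G k p q m ρ y z U W) :
    9 * (k : ℝ) ^ 2 - 5 * k - 4 < ρ ∧ 6 * (k : ℝ) ^ 2 + 2 * k < ρ ∧ 3 * (k : ℝ) ^ 2 < ρ := by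
  have h := S.hρ
  have h3 := S.k3
  refine ⟨?_, ?_, ?_⟩ <;>
    nlinarith [mul_nonneg (by linarith : (0 : ℝ) ≤ k) (sq_nonneg ((k : ℝ) - 7 / 3)),
      mul_nonneg (by linarith : (0 : ℝ) ≤ k) (sq_nonneg ((k : ℝ) - 4 / 3))]

/-- Common neighbours of two hubs. -/
lemma common (S : Setup G k p q m ρ y z U W) (h h' : V)
    (hh : 3 / 4 * ρ - (k - 1) - 3 * (k * (k - 1) / 2) ≤ ∑ u ∈ U, adj01 G h u * y u)
    (hh' : 3 / 4 * ρ - (k - 1) - 3 * (k * (k - 1) / 2) ≤ ∑ u ∈ U, adj01 G h' u * y u)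
    (F : Finset V) (hF : F.card ≤ 2 * k) :
    ∃ r ∈ U, r ∉ F ∧ G.Adj h r ∧ G.Adj r h' := by
  classical
  by_contra hcon
  push Not at hcon
  have h1 : ∑ u ∈ U, adj01 G h u * y u + ∑ u ∈ U, adj01 G h' u * y u ≤
      ∑ u ∈ U, y u + ∑ u ∈ U, (if u ∈ F then (1 : ℝ) else 0) := by
    rw [← Finset.sum_add_distrib, ← Finset.sum_add_distrib]
    refine Finset.sum_le_sum fun u hu => ?_
    have a1 := adj01_nonneg G h u
    have a2 := adj01_nonneg G h' u
    have a3 := adj01_le_one G h u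
    have a4 := adj01_le_one G h' u
    have y0 := S.y0 u
    have y1 := S.y1 u
    split_ifs with huF
    · nlinarith
    · by_cases hadj : G.Adj h u
      · have : ¬ G.Adj h' u := fun h2 => hcon u hu huF hadj h2.symm
        rw [adj01_of_not this]
        nlinarith
      · rw [adj01_of_not hadj]
        nlinarith
  have h2 : ∑ u ∈ U, (if u ∈ F then (1 : ℝ) else 0) ≤ 2 * k := by
    rw [Finset.sum_boole]
    have : (U.filter (fun u => u ∈ F)).card ≤ 2 * k :=
      (Finset.card_le_card (fun u hu => (Finset.mem_filter.1 hu).2)).trans hF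
    exact_mod_cast this
  rw [S.sumU] at h1
  have := S.rho_big.2.1
  nlinarith

lemma hubW (S : Setup G k p q m ρ y z U W) {w : V} (hw : w ∈ W) (hy : 3 / 4 ≤ y w) :
    3 / 4 * ρ - k * (k - 1) ≤ ∑ u ∈ U, adj01 G w u * y u := by
  have h1 := S.eigW hw
  have h2 : ∑ v ∈ W, adj01 G w v * y v ≤ eSum G W W := by
    calc _ ≤ ∑ v ∈ W, adj01 G w v := Finset.sum_le_sum fun v _ =>
          mul_le_of_le_one_right (adj01_nonneg _ _ _) (S.y1 v)
      _ ≤ eSum G W W := Finset.single_le_sum (f := fun u => ∑ v ∈ W, adj01 G u v)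
          (fun u _ => dnn u W) hw
  have h3 := S.c1
  have h4 : 3 * (k : ℝ) ^ 2 < ρ := S.rho_big.2.2
  have h5 : 0 ≤ ρ := by nlinarith
  nlinarith

lemma hubW' (S : Setup G k p q m ρ y z U W) {w : V} (hw : w ∈ W) (hy : 3 / 4 ≤ y w) :
    3 / 4 * ρ - (k - 1) - 3 * (k * (k - 1) / 2) ≤ ∑ u ∈ U, adj01 G w u * y u := by
  have := S.hubW hw hy
  have := S.k3
  nlinarith

/-- A hub outside has a neighbour in `U` that is not isolated in `U`. -/
lemma edge_exists (S : Setup G k p q m ρ y z U W) {w : V} (hw : w ∈ W) (hy : 3 / 4 ≤ y w) :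
    ∃ u ∈ U, G.Adj w u ∧ ∃ u' ∈ U, G.Adj u u' := by
  classical
  by_contra hcon
  push Not at hcon
  have h1 := S.weg (U.filter (fun u => ¬ G.Adj w u)) (Finset.filter_subset _ _)
  have h2 : ∑ u ∈ U.filter (fun u => ¬ G.Adj w u), ∑ v ∈ U.filter (fun u => ¬ G.Adj w u),
      adj01 G u v * min (y u) (y v) = ∑ u ∈ U, ∑ v ∈ U, adj01 G u v * min (y u) (y v) := by
    rw [Finset.sum_filter]
    refine Finset.sum_congr rfl fun u hu => ?_
    split_ifs with hau
    · symm
      exact Finset.sum_eq_zero fun v hv => by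
        rw [adj01_of_not (hcon u hu hau v hv), zero_mul]
    · rw [Finset.sum_filter]
      refine Finset.sum_congr rfl fun v hv => ?_
      split_ifs with hav
      · rw [adj01_of_not (fun h => hcon v hv hav u hu h.symm), zero_mul]
      · rfl
  have h3 : ∑ u ∈ U, adj01 G w u * y u + ∑ u ∈ U.filter (fun u => ¬ G.Adj w u), y u = ρ := by
    rw [← S.sumU, Finset.sum_filter, ← Finset.sum_add_distrib]
    refine Finset.sum_congr rfl fun u hu => ?_
    split_ifs with hau
    · rw [adj01_of_adj hau]; ring
    · rw [adj01_of_not hau]; ring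
  have h4 := S.c4
  have h5 := S.hubW hw hy
  rw [h2] at h1
  have h6 := S.k3
  have h7 : (k - 1 : ℝ) * (∑ u ∈ U, adj01 G w u * y u) ≤ (k - 1) * (k / 2) := by nlinarith
  have h8 := le_of_mul_le_mul_left h7 (by linarith)
  have := S.rho_big.2.2
  nlinarith

open Classical in
lemma cardW (S : Setup G k p q m ρ y z U W) :
    (W.filter (fun w => 3 / 4 ≤ y w)).card + 2 ≤ k := by
  by_contra hcon
  have hk := S.hk
  obtain ⟨T, hT, hTc⟩ := Finset.exists_subset_card_eq
    (show k - 1 ≤ (W.filter (fun w => 3 / 4 ≤ y w)).card by omega)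
  have hmem : ∀ h ∈ T.toList, h ∈ W ∧ 3 / 4 ≤ y h := by
    intro h hh
    have := hT (Finset.mem_toList.1 hh)
    simpa using this
  have hlen : T.toList.length = k - 1 := by rw [Finset.length_toList, hTc]
  obtain ⟨w, t, hwt⟩ : ∃ w t, T.toList = w :: t := by
    cases hT' : T.toList with
    | nil => rw [hT'] at hlen; simp at hlen; omega
    | cons a t => exact ⟨a, t, rfl⟩
  obtain ⟨hwW, hwy⟩ := hmem w (by rw [hwt]; simp)
  obtain ⟨u, hu, hwu, u', hu', huu'⟩ := S.edge_exists hwW hwy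
  have hdis : ∀ v, v ∈ U → v ∈ W → False := fun v h h' => Finset.disjoint_left.1 S.UW h h'
  obtain ⟨l, h1, h2, h3, h4, h5, h6, h7⟩ := hub_path G U (2 * k) T.toList (Finset.nodup_toList T)
    (fun a ha b hb F hF => S.common a b (S.hubW' (hmem a ha).1 (hmem a ha).2)
      (S.hubW' (hmem b hb).1 (hmem b hb).2) F hF) {u, u'} (by
        intro h hh hin
        simp at hin
        rcases hin with rfl | rfl
        · exact hdis _ hu (hmem _ hh).1
        · exact hdis _ hu' (hmem _ hh).1) (by
        have : ({u, u'} : Finset V).card ≤ 2 := Finset.card_le_two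
        omega)
  simp only [Finset.mem_insert, Finset.mem_singleton, not_or] at h4
  apply S.free
  refine theta_of_list G k p q S.hp S.hq S.hsum z (u' :: u :: l) (by simp; omega) ?_ ?_ ?_ ?_ ?_
  · rw [List.nodup_cons, List.nodup_cons, List.mem_cons, not_or]
    refine ⟨⟨huu'.ne.symm, fun h => (h4 _ h).2 rfl⟩, fun h => (h4 _ h).1 rfl, h2⟩
  · rw [List.isChain_cons, List.isChain_cons]
    refine ⟨by simpa using huu'.symm, ?_, h3⟩
    intro x hx
    rw [h5, hwt] at hx
    simp at hx
    rw [← hx]; exact hwu.symm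
  · intro hz
    rw [List.mem_cons, List.mem_cons] at hz
    rcases hz with rfl | rfl | hz
    · exact S.zU hu'
    · exact S.zU hu
    · rcases h7 z hz with h | h
      · exact S.zW (hmem z h).1
      · exact S.zU h
  · intro _
    exact (S.hU _).1 hu'
  · intro i hi hodd
    match i with
    | 0 => simp at hodd
    | 1 => exact (S.hU _).1 hu
    | j + 2 =>
      simp only [List.getElem_cons_succ]
      exact (S.hU _).1 (h6 j _ (by omega))

lemma nbrW (S : Setup G k p q m ρ y z U W) {u : V} (hu : u ∈ U) :
    ∑ w ∈ W, adj01 G u w * y w ≤ k - 2 + 3 * (k * (k - 1) / 2) := by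
  classical
  have h1 : ∑ w ∈ W, adj01 G u w * y w ≤ ∑ w ∈ W, (if 3 / 4 ≤ y w then (1 : ℝ) else 0) +
      3 * ∑ w ∈ W, (∑ u ∈ U, adj01 G w u) * (1 - y w) := by
    rw [Finset.mul_sum, ← Finset.sum_add_distrib]
    refine Finset.sum_le_sum fun w _ => ?_
    have a1 : adj01 G u w ≤ ∑ u ∈ U, adj01 G w u := by
      rw [adj01_symm]
      exact Finset.single_le_sum (f := fun u => adj01 G w u) (fun _ _ => adj01_nonneg _ _ _) hu
    have a2 := adj01_nonneg G u w
    have a3 := adj01_le_one G u w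
    have y0 := S.y0 w
    have y1 := S.y1 w
    have a4 : adj01 G u w * (1 - y w) ≤ (∑ u ∈ U, adj01 G w u) * (1 - y w) :=
      mul_le_mul_of_nonneg_right a1 (by linarith)
    split_ifs with hy
    · nlinarith
    · push Not at hy
      nlinarith
  have h2 := S.c2
  have h3 : ∑ w ∈ W, (if 3 / 4 ≤ y w then (1 : ℝ) else 0) ≤ k - 2 := by
    rw [Finset.sum_boole]
    have := S.cardW
    have : (((W.filter (fun w => 3 / 4 ≤ y w)).card + 2 : ℕ) : ℝ) ≤ k := by exact_mod_cast this
    push_cast at this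
    linarith
  linarith

lemma hubB (S : Setup G k p q m ρ y z U W) {u : V} (hu : u ∈ U) (hy : 3 / 4 ≤ y u) :
    3 / 4 * ρ - (k - 1) - 3 * (k * (k - 1) / 2) ≤ ∑ v ∈ U, adj01 G u v * y v := by
  have h1 := S.eigU hu
  have h2 := S.nbrW hu
  have h4 : 3 * (k : ℝ) ^ 2 < ρ := S.rho_big.2.2
  have h5 : 0 ≤ ρ := by nlinarith
  nlinarith

open Classical in
lemma cardB (S : Setup G k p q m ρ y z U W) (hne : (U.filter (fun w => 3 / 4 ≤ y w)).Nonempty) :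
    (U.filter (fun w => 3 / 4 ≤ y w)).card + (W.filter (fun w => 3 / 4 ≤ y w)).card + 1 ≤ k := by
  by_contra hcon
  have hk := S.hk
  set B := U.filter (fun w => 3 / 4 ≤ y w) with hB
  set W' := W.filter (fun w => 3 / 4 ≤ y w) with hW'
  obtain ⟨b, t, hbt⟩ : ∃ b t, B.toList = b :: t := by
    cases hT' : B.toList with
    | nil => rw [Finset.toList_eq_nil] at hT'; simp [hT'] at hne
    | cons a t => exact ⟨a, t, rfl⟩
  have hbU : b ∈ U := by
    have : b ∈ B.toList := by rw [hbt]; simp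
    rw [Finset.mem_toList, hB, Finset.mem_filter] at this
    exact this.1
  set hs := (B.toList ++ W'.toList).take k with hhs
  have hmem : ∀ h ∈ hs, (h ∈ U ∨ h ∈ W) ∧ 3 / 4 ≤ y h := by
    intro h hh
    have := List.mem_of_mem_take hh
    rw [List.mem_append, Finset.mem_toList, Finset.mem_toList, hB, hW', Finset.mem_filter,
      Finset.mem_filter] at this
    tauto
  have hnd : hs.Nodup := by
    refine List.Nodup.sublist (List.take_sublist _ _) ?_
    rw [List.nodup_append]
    refine ⟨Finset.nodup_toList _, Finset.nodup_toList _, ?_⟩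
    intro a ha c hc
    rw [Finset.mem_toList, hB, Finset.mem_filter] at ha
    rw [Finset.mem_toList, hW', Finset.mem_filter] at hc
    rintro rfl
    exact Finset.disjoint_left.1 S.UW ha.1 hc.1
  have hlen : hs.length = k := by
    rw [hhs, List.length_take, List.length_append, Finset.length_toList, Finset.length_toList]
    omega
  have hhead : hs.head? = some b := by
    rw [hhs, hbt]
    obtain ⟨j, hj⟩ : ∃ j, k = j + 1 := ⟨k - 1, by omega⟩
    rw [hj]; simp
  have hhub : ∀ h ∈ hs, 3 / 4 * ρ - (k - 1) - 3 * (k * (k - 1) / 2) ≤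
      ∑ u ∈ U, adj01 G h u * y u := by
    intro h hh
    rcases hmem h hh with ⟨h1 | h1, h2⟩
    · exact S.hubB h1 h2
    · exact S.hubW' h1 h2
  obtain ⟨l, h1, h2, h3, h4, h5, h6, h7⟩ := hub_path G U (2 * k) hs hnd
    (fun a ha b hb F hF => S.common a b (hhub a ha) (hhub b hb) F hF) ∅ (by simp) (by
      simp [hlen])
  apply S.free
  refine theta_of_list G k p q S.hp S.hq S.hsum z l (by omega) h2 h3 ?_ ?_ ?_
  · intro hz
    rcases h7 z hz with h | h
    · rcases (hmem z h).1 with h | h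
      · exact S.zU h
      · exact S.zW h
    · exact S.zU h
  · intro hpos
    have : l[0] = b := by
      rw [hhead, List.head?_eq_getElem?, List.getElem?_eq_getElem hpos] at h5
      simpa using h5
    rw [this]
    exact (S.hU _).1 hbU
  · intro i hi hodd
    exact (S.hU _).1 (h6 i hi hodd)

open Classical in
lemma cardB' (S : Setup G k p q m ρ y z U W) :
    (U.filter (fun w => 3 / 4 ≤ y w)).card + 1 ≤ k := by
  rcases (U.filter (fun w => 3 / 4 ≤ y w)).eq_empty_or_nonempty with h | h
  · rw [h]; have := S.hk; simp; omega
  · have := S.cardB h; omega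

lemma noMid (S : Setup G k p q m ρ y z U W) {u : V} (hu : u ∈ U) (hy : ¬ 3 / 4 ≤ y u) :
    y u < 1 / 2 := by
  classical
  by_contra hcon
  push Not at hcon hy
  have h1 := S.eigU hu
  have h2 := S.nbrW hu
  have h3 : ∑ v ∈ U, adj01 G u v * y v ≤ ∑ v ∈ U, (if 3 / 4 ≤ y v then (1 : ℝ) else 0) +
      3 * ∑ v ∈ U, adj01 G u v * (1 - max (y u) (y v)) := by
    rw [Finset.mul_sum, ← Finset.sum_add_distrib]
    refine Finset.sum_le_sum fun v _ => ?_
    have a2 := adj01_nonneg G u v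
    have a3 := adj01_le_one G u v
    have y0 := S.y0 v
    have y1 := S.y1 v
    have ym := max_le (S.y1 u) (S.y1 v)
    split_ifs with hyv
    · have := mul_nonneg a2 (by linarith : 0 ≤ 1 - max (y u) (y v))
      nlinarith
    · push Not at hyv
      have ym := max_lt hy hyv
      nlinarith
  have h4 : ∑ v ∈ U, adj01 G u v * (1 - max (y u) (y v)) ≤ k * (k - 1) := by
    refine le_trans ?_ S.c3
    exact Finset.single_le_sum (f := fun u => ∑ v ∈ U, adj01 G u v * (1 - max (y u) (y v)))
      (fun u _ => Finset.sum_nonneg fun v _ =>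
        mul_nonneg (adj01_nonneg _ _ _) (by linarith [max_le (S.y1 u) (S.y1 v)])) hu
  have h5 : ∑ v ∈ U, (if 3 / 4 ≤ y v then (1 : ℝ) else 0) ≤ k - 1 := by
    rw [Finset.sum_boole]
    have := S.cardB'
    have : (((U.filter (fun w => 3 / 4 ≤ y w)).card + 1 : ℕ) : ℝ) ≤ k := by exact_mod_cast this
    push_cast at this
    linarith
  have h6 := S.rho_big.1
  nlinarith [S.rho_big.2.2]

end Setup

namespace Setup

variable {V : Type} [Fintype V] {G : SimpleGraph V} {k p q m : ℕ} {ρ : ℝ} {y : V → ℝ}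
    {z : V} {U W : Finset V}

open Classical in
/-- The slack identity for any splitting of `U`. -/
lemma slack (S : Setup G k p q m ρ y z U W) (B : Finset V) (hB : B ⊆ U) :
    eSum G W W / 2 + ∑ w ∈ W, (∑ u ∈ U, adj01 G w u) * (1 - y w) +
      ((B.card : ℝ) * (B.card - 1) - eSum G B B) / 2 +
      ∑ v ∈ U \ B, ((B.card : ℝ) - ∑ u ∈ B, adj01 G v u) * y v +
      ∑ v ∈ U \ B, (∑ u ∈ U \ B, adj01 G v u) * (1 / 2 - y v) +
      ∑ u ∈ B, ((∑ v ∈ U, adj01 G u v) - (k - 1)) * (1 - y u) =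
    k * (k - 1) / 2 + (B.card : ℝ) * (B.card - 1) / 2 - (k - 1) * B.card
      - (k - 1 - B.card) * (ρ - ∑ u ∈ B, y u) := by
  have h0 := S.main
  have h1 := eSum_split G B U hB
  have hd : ∀ u, ∑ v ∈ U, adj01 G u v = ∑ v ∈ U \ B, adj01 G u v + ∑ v ∈ B, adj01 G u v :=
    fun u => (Finset.sum_sdiff hB).symm
  have h2 : ∑ u ∈ U, ((∑ v ∈ U, adj01 G u v) - (k - 1)) * y u =
      ∑ u ∈ U \ B, ((∑ v ∈ U, adj01 G u v) - (k - 1)) * y u +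
      ∑ u ∈ B, ((∑ v ∈ U, adj01 G u v) - (k - 1)) * y u := (Finset.sum_sdiff hB).symm
  have h3 : ∑ u ∈ B, ((∑ v ∈ U, adj01 G u v) - (k - 1)) * y u =
      eSum G B (U \ B) + eSum G B B - (k - 1) * B.card -
      ∑ u ∈ B, ((∑ v ∈ U, adj01 G u v) - (k - 1)) * (1 - y u) := by
    have : (k - 1 : ℝ) * B.card = ∑ u ∈ B, (k - 1 : ℝ) := by
      rw [Finset.sum_const, nsmul_eq_mul, mul_comm]
    rw [this]
    unfold eSum
    rw [← Finset.sum_add_distrib, ← Finset.sum_sub_distrib, ← Finset.sum_sub_distrib]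
    refine Finset.sum_congr rfl fun u _ => ?_
    rw [hd u]; ring
  have h4 : ∑ u ∈ U \ B, y u = ρ - ∑ u ∈ B, y u := by
    rw [← S.sumU, ← Finset.sum_sdiff hB]; ring
  have h5 : ∑ u ∈ U \ B, ((∑ v ∈ U, adj01 G u v) - (k - 1)) * y u =
      - ((k - 1 - B.card) * ∑ u ∈ U \ B, y u)
      - ∑ v ∈ U \ B, ((B.card : ℝ) - ∑ u ∈ B, adj01 G v u) * y v
      + eSum G (U \ B) (U \ B) / 2
      - ∑ v ∈ U \ B, (∑ u ∈ U \ B, adj01 G v u) * (1 / 2 - y v) := by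
    unfold eSum
    rw [Finset.mul_sum, Finset.sum_div, ← Finset.sum_neg_distrib, ← Finset.sum_sub_distrib,
      ← Finset.sum_add_distrib, ← Finset.sum_sub_distrib]
    refine Finset.sum_congr rfl fun u _ => ?_
    rw [hd u]; ring
  rw [h2, h3, h5, h4] at h0
  linarith

open Classical in
/-- The structure of the graph in the equality case. -/
lemma struct (S : Setup G k p q m ρ y z U W) :
    ∃ B ⊆ U, B.card + 1 = k ∧ W = ∅ ∧ eSum G B B = (B.card : ℝ) * (B.card - 1) ∧
      (∀ v ∈ U \ B, ∑ u ∈ B, adj01 G v u = B.card) ∧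
      (∀ v ∈ U \ B, ∑ u ∈ U \ B, adj01 G v u = 0) := by
  have hk3 := S.k3
  have hρ := S.rho_big
  set B := U.filter (fun w => 3 / 4 ≤ y w) with hBdef
  have hB : B ⊆ U := Finset.filter_subset _ _
  have hbk : B.card + 1 ≤ k := S.cardB'
  have hid := S.slack B hB
  have s1 : 0 ≤ eSum G W W := eSum_nonneg _ _ _
  have s2 := S.n2
  have s3 : eSum G B B ≤ (B.card : ℝ) * (B.card - 1) := eSum_self_le G B
  have hdB : ∀ v, ∑ u ∈ B, adj01 G v u ≤ B.card := by
    intro v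
    calc ∑ u ∈ B, adj01 G v u ≤ ∑ u ∈ B, (1 : ℝ) :=
          Finset.sum_le_sum fun u _ => adj01_le_one _ _ _
      _ = B.card := by simp
  have t4 : ∀ v ∈ U \ B, 0 ≤ ((B.card : ℝ) - ∑ u ∈ B, adj01 G v u) * y v := fun v _ =>
    mul_nonneg (by linarith [hdB v]) (S.y0 v)
  have s4 := Finset.sum_nonneg t4
  have hlow : ∀ v ∈ U \ B, y v < 1 / 2 := by
    intro v hv
    rw [Finset.mem_sdiff, hBdef, Finset.mem_filter] at hv
    exact S.noMid hv.1 (fun h => hv.2 ⟨hv.1, h⟩)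
  have t5 : ∀ v ∈ U \ B, 0 ≤ (∑ u ∈ U \ B, adj01 G v u) * (1 / 2 - y v) := fun v hv =>
    mul_nonneg (dnn _ _) (by linarith [hlow v hv])
  have s5 := Finset.sum_nonneg t5
  have t6 : ∀ u ∈ B, 0 ≤ ((∑ v ∈ U, adj01 G u v) - (k - 1)) * (1 - y u) := by
    intro u hu
    rw [hBdef, Finset.mem_filter] at hu
    have h1 := S.hubB hu.1 hu.2
    have h2 : ∑ v ∈ U, adj01 G u v * y v ≤ ∑ v ∈ U, adj01 G u v := Finset.sum_le_sum fun v _ =>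
          mul_le_of_le_one_right (adj01_nonneg _ _ _) (S.y1 v)
    refine mul_nonneg ?_ (by linarith [S.y1 u])
    nlinarith [hρ.2.1]
  have s6 := Finset.sum_nonneg t6
  have hyB : ∑ u ∈ B, y u ≤ B.card := by
    calc ∑ u ∈ B, y u ≤ ∑ u ∈ B, (1 : ℝ) :=
          Finset.sum_le_sum fun u _ => S.y1 u
      _ = B.card := by simp
  have hbeq : B.card + 1 = k := by
    by_contra hne
    have h1 : B.card + 2 ≤ k := by omega
    have h2 : (B.card : ℝ) + 2 ≤ k := by exact_mod_cast h1
    have h3 : (0 : ℝ) ≤ B.card := Nat.cast_nonneg _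
    have h4 : ρ - B.card ≤ (k - 1 - B.card) * (ρ - ∑ u ∈ B, y u) := by
      have : 0 ≤ ρ - B.card := by nlinarith [hρ.2.2]
      nlinarith
    nlinarith [hρ.2.2]
  have hbr : (B.card : ℝ) = k - 1 := by
    have : ((B.card + 1 : ℕ) : ℝ) = k := by exact_mod_cast hbeq
    push_cast at this
    linarith
  have hz : k * (k - 1) / 2 + (B.card : ℝ) * (B.card - 1) / 2 - (k - 1) * B.card
      - (k - 1 - B.card) * (ρ - ∑ u ∈ B, y u) = 0 := by
    rw [hbr]; ring
  rw [hz] at hid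
  have z1 : eSum G W W = 0 := by linarith
  have z2 : ∑ w ∈ W, (∑ u ∈ U, adj01 G w u) * (1 - y w) = 0 := by linarith
  have z3 : eSum G B B = (B.card : ℝ) * (B.card - 1) := by linarith
  have z4 := (Finset.sum_eq_zero_iff_of_nonneg t4).1 (by linarith)
  have z5 := (Finset.sum_eq_zero_iff_of_nonneg t5).1 (by linarith)
  refine ⟨B, hB, hbeq, ?_, z3, ?_, ?_⟩
  · rw [Finset.eq_empty_iff_forall_notMem]
    intro w hw
    have z2' := (Finset.sum_eq_zero_iff_of_nonneg (fun w _ =>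
      mul_nonneg (dnn w U) (by linarith [S.y1 w]))).1 z2 w hw
    have z1' : ∑ v ∈ W, adj01 G w v = 0 :=
      (Finset.sum_eq_zero_iff_of_nonneg (fun w _ => dnn w W)).1 z1 w hw
    obtain ⟨x, hx⟩ := S.hiso w
    have hxU : x ∈ U := by
      rw [S.hU]
      by_contra hzx
      have hxz : x ≠ z := by
        rintro rfl
        exact ((S.hW w).1 hw).2 hx.symm
      have hxW : x ∈ W := (S.hW x).2 ⟨hxz, hzx⟩
      have := (Finset.sum_eq_zero_iff_of_nonneg (fun v _ => adj01_nonneg G w v)).1 z1' x hxW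
      rw [adj01_of_adj hx] at this
      exact one_ne_zero this
    have hpos : 1 ≤ ∑ u ∈ U, adj01 G w u := by
      rw [← adj01_of_adj hx]
      exact Finset.single_le_sum (f := fun u => adj01 G w u) (fun _ _ => adj01_nonneg _ _ _) hxU
    have hyw : y w = 1 := by
      rcases mul_eq_zero.1 z2' with h | h <;> linarith
    have hne : B.Nonempty := by
      rw [← Finset.card_pos]; have := S.hk; omega
    have hc := S.cardB hne
    rw [← hBdef] at hc
    have : 0 < (W.filter (fun w => 3 / 4 ≤ y w)).card := by
      rw [Finset.card_pos]
      exact ⟨w, Finset.mem_filter.2 ⟨hw, by rw [hyw]; norm_num⟩⟩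
    omega
  · intro v hv
    have hvU : v ∈ U := (Finset.mem_sdiff.1 hv).1
    have h1 := S.eigU hvU
    have h2 : 0 ≤ ∑ x ∈ U, adj01 G v x * y x :=
      Finset.sum_nonneg fun x _ => mul_nonneg (adj01_nonneg _ _ _) (S.y0 x)
    have h3 : 0 ≤ ∑ x ∈ W, adj01 G v x * y x :=
      Finset.sum_nonneg fun x _ => mul_nonneg (adj01_nonneg _ _ _) (S.y0 x)
    rcases mul_eq_zero.1 (z4 v hv) with h | h
    · linarith
    · rw [h] at h1; linarith
  · intro v hv
    rcases mul_eq_zero.1 (z5 v hv) with h | h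
    · exact h
    · linarith [hlow v hv]

open Classical in
/-- Adjacency in the equality case, together with the edge count. -/
lemma shape (S : Setup G k p q m ρ y z U W) :
    ∃ A : Finset V, A.card = k ∧ (∀ u v, G.Adj u v ↔ u ≠ v ∧ (u ∈ A ∨ v ∈ A)) ∧
      2 * (m : ℝ) = 2 * k * (Aᶜ.card : ℝ) + k * (k - 1) := by
  obtain ⟨B, hB, hbk, hW, hBB, hBS, hSS⟩ := S.struct
  have hzB : z ∉ B := fun h => S.zU (hB h)
  have hbr : (B.card : ℝ) = k - 1 := by
    have : ((B.card + 1 : ℕ) : ℝ) = k := by exact_mod_cast hbk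
    push_cast at this
    linarith
  have hcomp : (insert z B)ᶜ = U \ B := by
    ext v
    simp only [Finset.mem_compl, Finset.mem_insert, Finset.mem_sdiff, not_or]
    constructor
    · rintro ⟨h1, h2⟩
      refine ⟨?_, h2⟩
      rw [S.hU]
      by_contra h3
      have : v ∈ W := (S.hW v).2 ⟨h1, h3⟩
      rw [hW] at this
      simp at this
    · rintro ⟨h1, h2⟩
      exact ⟨fun h => S.zU (h ▸ h1), h2⟩
  have hcover : ∀ v, v ≠ z → v ∈ U := by
    intro v h1
    rw [S.hU]
    by_contra h3
    have : v ∈ W := (S.hW v).2 ⟨h1, h3⟩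
    rw [hW] at this
    simp at this
  have aBB : ∀ u ∈ B, ∀ v ∈ B, u ≠ v → G.Adj u v := by
    have hle : ∀ u ∈ B, ∑ v ∈ B, adj01 G u v ≤ ∑ v ∈ B, (if u = v then (0 : ℝ) else 1) := by
      intro u _
      refine Finset.sum_le_sum fun v _ => ?_
      split_ifs with h
      · rw [h, adj01_self]
      · exact adj01_le_one _ _ _
    have hone : ∀ u ∈ B, ∑ v ∈ B, (if u = v then (0 : ℝ) else 1) = B.card - 1 := by
      intro u hu
      have : ∀ v, (if u = v then (0 : ℝ) else 1) = 1 - (if u = v then (1 : ℝ) else 0) := by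
        intro v; split_ifs <;> simp
      simp only [this, Finset.sum_sub_distrib, Finset.sum_ite_eq, hu, if_true]
      simp
    have hsum : ∑ u ∈ B, ∑ v ∈ B, adj01 G u v =
        ∑ u ∈ B, ∑ v ∈ B, (if u = v then (0 : ℝ) else 1) := by
      rw [Finset.sum_congr rfl hone, Finset.sum_const, nsmul_eq_mul]
      exact hBB
    have h1 := (Finset.sum_eq_sum_iff_of_le hle).1 hsum
    intro u hu v hv huv
    have h2 := (Finset.sum_eq_sum_iff_of_le (fun v _ => by
      split_ifs with h
      · rw [h, adj01_self]
      · exact adj01_le_one _ _ _)).1 (h1 u hu) v hv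
    rw [if_neg huv] at h2
    by_contra h3
    rw [adj01_of_not h3] at h2
    exact zero_ne_one h2
  have aSB : ∀ u ∈ U \ B, ∀ v ∈ B, G.Adj u v := by
    intro u hu v hv
    have h1 : ∑ v ∈ B, adj01 G u v = ∑ v ∈ B, (1 : ℝ) := by rw [hBS u hu]; simp
    have h2 := (Finset.sum_eq_sum_iff_of_le (fun v _ => adj01_le_one G u v)).1 h1 v hv
    by_contra h3
    rw [adj01_of_not h3] at h2
    exact zero_ne_one h2
  have aSS : ∀ u ∈ U \ B, ∀ v ∈ U \ B, ¬ G.Adj u v := by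
    intro u hu v hv h
    have := (Finset.sum_eq_zero_iff_of_nonneg (fun v _ => adj01_nonneg G u v)).1 (hSS u hu) v hv
    rw [adj01_of_adj h] at this
    exact one_ne_zero this
  refine ⟨insert z B, by rw [Finset.card_insert_of_notMem hzB, hbk], ?_, ?_⟩
  · have key : ∀ u v, u ≠ v → u ∈ insert z B → G.Adj u v := by
      intro u v huv hu
      rcases Finset.mem_insert.1 hu with rfl | hu
      · exact (S.hU v).1 (hcover v huv.symm)
      · by_cases hvz : v = z
        · rw [hvz]; exact ((S.hU u).1 (hB hu)).symm
        · by_cases hvB : v ∈ B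
          · exact aBB u hu v hvB huv
          · exact (aSB v (Finset.mem_sdiff.2 ⟨hcover v hvz, hvB⟩) u hu).symm
    intro u v
    constructor
    · intro h
      refine ⟨h.ne, ?_⟩
      by_contra hcon
      rw [not_or, ← Finset.mem_compl, ← Finset.mem_compl, hcomp] at hcon
      exact aSS u hcon.1 v hcon.2 h
    · rintro ⟨huv, h | h⟩
      · exact key u v huv h
      · exact (key v u huv.symm h).symm
  · rw [hcomp]
    have h1 := S.edges
    have h2 := eSum_split G B U hB
    have h3 : eSum G U W = 0 := by rw [hW]; simp [eSum]
    have h4 : eSum G W W = 0 := by rw [hW]; simp [eSum]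
    have h5 : eSum G B (U \ B) = (U \ B).card * B.card := by
      rw [eSum_comm]
      unfold eSum
      rw [Finset.sum_congr rfl hBS, Finset.sum_const, nsmul_eq_mul]
    have h6 : eSum G (U \ B) (U \ B) = 0 := Finset.sum_eq_zero hSS
    have h7 : (U.card : ℝ) = (U \ B).card + B.card := by
      have := Finset.card_sdiff_add_card_eq_card hB
      exact_mod_cast this.symm
    rw [h1, h2, h3, h4, h5, h6, h7, hBB, hbr]
    ring

end Setup

open Classical in
/-- Building the isomorphism. -/
lemma iso_of_shape {V : Type} [Fintype V] (G : SimpleGraph V) (k : ℕ) (A : Finset V)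
    (hA : A.card = k) (hadj : ∀ u v, G.Adj u v ↔ u ≠ v ∧ (u ∈ A ∨ v ∈ A)) :
    Nonempty (G ≃g joinStarG k Aᶜ.card) := by
  have e1 : {x // x ∈ A} ≃ Fin k := A.equivFinOfCardEq hA
  have e2 : {x // ¬ x ∈ A} ≃ Fin Aᶜ.card :=
    (Equiv.subtypeEquivRight (fun x => Finset.mem_compl.symm)).trans (Aᶜ.equivFin)
  let e : Fin k ⊕ Fin Aᶜ.card ≃ V := (Equiv.sumCongr e1.symm e2.symm).trans
    (Equiv.sumCompl (fun x => x ∈ A))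
  have hl : ∀ i, e (Sum.inl i) ∈ A := fun i => (e1.symm i).2
  have hr : ∀ i, e (Sum.inr i) ∉ A := fun i => (e2.symm i).2
  have hmem : ∀ x, e x ∈ A ↔ x.isLeft = true := by
    rintro (i | i)
    · simp [hl i]
    · simp [hr i]
  refine ⟨(RelIso.symm ⟨e, ?_⟩)⟩
  intro x x'
  rw [hadj, hmem, hmem]
  unfold joinStarG
  rw [SimpleGraph.fromRel_adj, e.injective.ne_iff]

/-- for `k ≥ 3`, `q ≥ p ≥ 3`, `p + q = 2k + 1` and
`m ≥ (9/4)k⁶ + 6k⁵ + 46k⁴ + 56k³ + 196k²`, if a `θ(1,p,q)`-free graph `G` with `m` edges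
and no isolated vertices satisfies `ρ(G) = (k - 1 + √(4m - k² + 1))/2`, then
`G ≅ K_k ∨ (m/k - (k-1)/2)·K₁`. -/
theorem theta_free_equality_case (k p q : ℕ) (hk : 3 ≤ k) (hp : 3 ≤ p) (hpq : p ≤ q)
    (hsum : p + q = 2 * k + 1)
    {V : Type} [Fintype V] (G : SimpleGraph V)
    (hfree : ¬ ContainsSub (thetaGraph p q) G)
    (m : ℕ) (hm : G.edgeSet.ncard = m)
    (hiso : ∀ v : V, (G.neighborSet v).ncard ≠ 0)
    (hmbig : (9 / 4 : ℝ) * k ^ 6 + 6 * k ^ 5 + 46 * k ^ 4 + 56 * k ^ 3 + 196 * k ^ 2 ≤ m)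
    (ρ : ℝ) (hρ : IsSpecRad G ρ)
    (heq : ρ = ((k : ℝ) - 1 + Real.sqrt (4 * m - k ^ 2 + 1)) / 2) :
    ∃ s : ℕ, (s : ℝ) = (m : ℝ) / k - ((k : ℝ) - 1) / 2 ∧
      Nonempty (G ≃g joinStarG k s) := by
  classical
  obtain ⟨y, z, y0, y1, yz, eig⟩ := perron G ρ hρ
  have hk3 : (3 : ℝ) ≤ k := by exact_mod_cast hk
  have hmR : ((3 / 2 : ℝ) * k ^ 3 + 2 * k ^ 2 + 14 * k) ^ 2 ≤ m := by
    refine le_trans (le_of_eq ?_) hmbig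
    ring
  have hRk : (k : ℝ) ≤ (3 / 2 : ℝ) * k ^ 3 + 2 * k ^ 2 + 14 * k := by
    have h1 : (0 : ℝ) ≤ k ^ 3 := by positivity
    have h2 : (0 : ℝ) ≤ k ^ 2 := by positivity
    linarith
  obtain ⟨R, hR⟩ : ∃ R : ℝ, R = (3 / 2 : ℝ) * k ^ 3 + 2 * k ^ 2 + 14 * k := ⟨_, rfl⟩
  rw [← hR] at hmR hRk
  have hnn : (0 : ℝ) ≤ 4 * m - k ^ 2 + 1 := by nlinarith
  have hsq := Real.sq_sqrt hnn
  have hle : 2 * R - (k - 1) ≤ Real.sqrt (4 * m - k ^ 2 + 1) := by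
    apply Real.le_sqrt_of_sq_le
    nlinarith
  have hs : Real.sqrt (4 * m - k ^ 2 + 1) = 2 * ρ - (k - 1) := by rw [heq]; ring
  rw [hs] at hsq hle
  have S : Setup G k p q m ρ y z (Finset.univ.filter (fun v => G.Adj z v))
      (Finset.univ.filter (fun v => v ≠ z ∧ ¬ G.Adj z v)) :=
    { hk := hk
      hp := hp
      hq := hp.trans hpq
      hsum := hsum
      free := hfree
      y0 := y0
      y1 := y1
      yz := yz
      eig := eig
      hU := by intro v; simp
      hW := by intro v; simp
      hρ := by rw [← hR]; linarith
      hiso := by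
        intro v
        by_contra hcon
        push Not at hcon
        apply hiso v
        have : G.neighborSet v = ∅ := by
          ext w
          simp [hcon w]
        rw [this, Set.ncard_empty]
      hm := by rw [eSum_univ, hm]
      hquad := by linarith }
  obtain ⟨A, hA, hadj, hedge⟩ := S.shape
  refine ⟨Aᶜ.card, ?_, iso_of_shape G k A hA hadj⟩
  have hk0 : (k : ℝ) ≠ 0 := by linarith
  field_simp
  linarith
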